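/- Suppose Assumptions A1 and A3 hold with slackness δ > 0, V > 0, all initial queue backlogs are zero, and a C(t)-approximate policy is run with C(t) ≤ C + Vε_V + Σ_l Z_l(t)ε_Z + Σ_k Q_k(t)ε_Q + Σ_m |H_m(t)|ε_H, where the nonnegative constants satisfy ε_Q < δ, ε_H < δ, and ε_Z + ε_H Σ_{m=1}^M β_{l,m} < δ for all l ∈ {1,…,L}. Then for every slot t ≥ 0 and all l, k, m: Q_k(t) ≤ VC₃/θ, Z_l(t) ≤ VC₃/θ, and |H_m(t)| ≤ VC₃/θ, where θ = min[δ − ε_Q, δ − ε_H, (δ − ε_Z − ε_H β_sum)/(1 + β_sum)] with β_sum = max_l Σ_m β_{l,m}, C₃ = √(D₁ + D₂ + D₃), D₁ = [(B+C)/V + (y₀^max − y₀^min) + (f^max − f^min) + ε_V]², D₂ = 2Dθ²/V², D₃ = (2 z_max θ/V)√D₁, and z_max is the maximum over all constants z_l^diff, q_k^diff, h_m^diff. -/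

import Mathlib

/-- The "drift-plus-penalty" expression `E_t(α,γ)` whose (approximate) per-slot
minimization defines the universal scheduling algorithm. -/
noncomputable def driftExpr {Act Ω : Type*} {K M L : ℕ}
    (ahat bhat : Fin K → Act → Ω → ℝ) (xhat : Fin M → Act → Ω → ℝ)
    (y0hat : Act → Ω → ℝ) (yhat : Fin L → Act → Ω → ℝ)
    (g : Fin L → (Fin M → ℝ) → ℝ) (f : (Fin M → ℝ) → ℝ) (V : ℝ)
    (w : Ω) (Zv : Fin L → ℝ) (Qv : Fin K → ℝ) (Hv : Fin M → ℝ)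
    (a : Act) (γ : Fin M → ℝ) : ℝ :=
  V * y0hat a w + V * f γ
    + ∑ l, Zv l * (yhat l a w + g l γ)
    + ∑ k, Qv k * (ahat k a w - bhat k a w)
    + ∑ m, Hv m * (γ m - xhat m a w)

/-!
Let `Λ` be the sum of the squares of all backlogs and `S` the sum of their absolute values. Moving
the auxiliary variables of the Slater action by `∓(θ + ε_H)`, against the sign of each `H_m`, gives
a feasible decision that drains every queue at rate `θ` beyond the approximation error, so `Λ` can
only grow while `S ≤ R := V c / θ`, where `c = √D₁`. There `Λ ≤ S² ≤ R²`, and since all increments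
are bounded, one slot later `Λ ≤ R² + 2 D + 2 z_max R = (V C₃ / θ)²`. This bound is therefore never
crossed, and it dominates the square of each single queue.
-/

section RealInequalities

lemma sq_max_sub_zero_add_le {q a b : ℝ} (hq : 0 ≤ q) (ha : 0 ≤ a) (hb : 0 ≤ b) :
    (max (q - b) 0 + a) ^ 2 ≤ q ^ 2 + (b ^ 2 + a ^ 2) + 2 * (q * (a - b)) := by
  rcases le_total (q - b) 0 with h | h
  · rw [max_eq_right h]
    nlinarith [sq_nonneg (q - b), mul_nonneg hq ha]
  · rw [max_eq_left h]
    nlinarith [mul_nonneg ha hb]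

lemma sq_max_zero_le_sq (x : ℝ) : max x 0 ^ 2 ≤ x ^ 2 :=
  (pow_le_pow_left₀ (le_max_right x 0) (max_le (le_abs_self x) (abs_nonneg x)) 2).trans_eq
    (sq_abs x)

variable {ι : Type*} [Fintype ι]

lemma sum_sq_le_of_abs_le_add {x x' c w : ι → ℝ} {z : ℝ} (hx' : ∀ i, |x' i| ≤ |x i| + c i)
    (hc : ∀ i, 0 ≤ c i) (hcw : ∀ i, c i ≤ w i) (hwz : ∀ i, w i ≤ z) :
    ∑ i, x' i ^ 2 ≤ ∑ i, x i ^ 2 + ∑ i, w i * c i + 2 * (z * ∑ i, |x i|) := by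
  simp only [Finset.mul_sum, ← Finset.sum_add_distrib]
  refine Finset.sum_le_sum fun i _ => ?_
  have hcz : c i * |x i| ≤ z * |x i| := by gcongr; exact (hcw i).trans (hwz i)
  calc x' i ^ 2 ≤ (|x i| + c i) ^ 2 := sq_le_sq.2 ((hx' i).trans (le_abs_self _))
    _ = x i ^ 2 + c i * c i + 2 * (c i * |x i|) := by rw [← sq_abs (x i)]; ring
    _ ≤ x i ^ 2 + w i * c i + 2 * (z * |x i|) := by
      gcongr
      exacts [hc i, hcw i]

lemma sum_sq_le_sq_sum_abs (x : ι → ℝ) : ∑ i, x i ^ 2 ≤ (∑ i, |x i|) ^ 2 := by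
  simpa only [sq_abs] using
    Finset.sum_sq_le_sq_sum_of_nonneg (s := Finset.univ) fun i _ => abs_nonneg (x i)

lemma sum_mul_add_sum_mul_le {x u : ι → ℝ} {ε θ : ℝ} (hx : ∀ i, 0 ≤ x i)
    (hu : ∀ i, u i + ε ≤ -θ) :
    ∑ i, x i * u i + ∑ i, x i * ε ≤ -(θ * ∑ i, |x i|) := by
  rw [← Finset.sum_add_distrib, Finset.mul_sum, ← Finset.sum_neg_distrib]
  refine Finset.sum_le_sum fun i _ => ?_
  rw [abs_of_nonneg (hx i)]
  linarith [mul_le_mul_of_nonneg_left (hu i) (hx i)]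

lemma le_of_drift_of_growth {Λ S : ℕ → ℝ} {G θ D z : ℝ} (hθ : 0 < θ) (hz : 0 ≤ z)
    (hΛ : ∀ t, 0 ≤ Λ t) (hS : ∀ t, 0 ≤ S t) (hΛS : ∀ t, Λ t ≤ S t ^ 2) (hS_zero : S 0 = 0)
    (drift : ∀ t, Λ (t + 1) ≤ Λ t + 2 * (G - θ * S t))
    (growth : ∀ t, Λ (t + 1) ≤ Λ t + 2 * D + 2 * (z * S t)) (t : ℕ) :
    Λ t ≤ (G / θ) ^ 2 + 2 * D + 2 * (z * (G / θ)) := by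
  have hθR : θ * (G / θ) = G := mul_div_cancel₀ G hθ.ne'
  induction t with
  | zero =>
    have hΛ_zero : Λ 0 ≤ 0 := by simpa [hS_zero] using hΛS 0
    have drift_zero := drift 0
    have growth_zero := growth 0
    rw [hS_zero] at drift_zero growth_zero
    have hD : 0 ≤ D := by linarith [hΛ 1]
    have hG : 0 ≤ G := by linarith [hΛ 1]
    exact hΛ_zero.trans (by positivity)
  | succ t ih =>
    rcases le_total (S t) (G / θ) with hSR | hRS
    · have hsq : S t ^ 2 ≤ (G / θ) ^ 2 := pow_le_pow_left₀ (hS t) hSR 2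
      linarith [growth t, hΛS t, mul_le_mul_of_nonneg_left hSR hz]
    · linarith [drift t, mul_le_mul_of_nonneg_left hRS hθ.le]

end RealInequalities

section Constants

/-- The drain rate `θ` of the theorem. -/
noncomputable def slack (δ εZ εQ εH βsum : ℝ) : ℝ :=
  min (δ - εQ) (min (δ - εH) ((δ - εZ - εH * βsum) / (1 + βsum)))

variable {δ εZ εQ εH βsum : ℝ}

lemma slack_pos (hβ : 0 ≤ βsum) (hQ : εQ < δ) (hH : εH < δ) (hZ : εZ + εH * βsum < δ) :
    0 < slack δ εZ εQ εH βsum :=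
  lt_min (by linarith) (lt_min (by linarith) (div_pos (by linarith) (by linarith)))

lemma le_slack_iff (hβ : 0 ≤ βsum) {θ : ℝ} :
    θ ≤ slack δ εZ εQ εH βsum ↔
      θ + εQ ≤ δ ∧ θ + εH ≤ δ ∧ θ + εZ + (θ + εH) * βsum ≤ δ := by
  rw [slack, le_min_iff, le_min_iff, le_div_iff₀ (by linarith), le_sub_iff_add_le,
    le_sub_iff_add_le]
  refine and_congr_right' (and_congr_right' ?_)
  constructor <;> intro h <;> linarith

/-- The queue bound `V C₃ / θ` of the theorem, with `D₁ = c ^ 2`. -/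
noncomputable def backlogBound (V θ c D z : ℝ) : ℝ :=
  V * √(c ^ 2 + 2 * D * θ ^ 2 / V ^ 2 + 2 * z * θ / V * √(c ^ 2)) / θ

lemma sqrt_le_backlogBound {V θ c D z : ℝ} (hV : 0 < V) (hθ : 0 < θ) (hz : 0 ≤ z) :
    √((V * c / θ) ^ 2 + 2 * D + 2 * (z * (V * c / θ))) ≤ backlogBound V θ c D z := by
  have hVθ : 0 ≤ V / θ := by positivity
  calc √((V * c / θ) ^ 2 + 2 * D + 2 * (z * (V * c / θ)))
      ≤ √((V * c / θ) ^ 2 + 2 * D + 2 * (z * (V * |c| / θ))) := by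
        gcongr
        exact le_abs_self c
    _ = √((V / θ) ^ 2 * (c ^ 2 + 2 * D * θ ^ 2 / V ^ 2 + 2 * z * θ / V * |c|)) := by
        congr 1
        field_simp
    _ = backlogBound V θ c D z := by
        rw [Real.sqrt_mul (sq_nonneg _), Real.sqrt_sq hVθ, backlogBound, Real.sqrt_sq_eq_abs]
        ring

end Constants

/-- The state `(Q, Z, H)` of all actual and virtual queues in one slot. -/
structure Backlog (K M L : ℕ) where
  Q : Fin K → ℝ
  Z : Fin L → ℝ
  H : Fin M → ℝ

namespace Backlog

variable {K M L : ℕ} (Θ : Backlog K M L)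

/-- The quadratic Lyapunov function, without the customary factor `1 / 2`. -/
def lyapunov : ℝ := ∑ l, Θ.Z l ^ 2 + ∑ k, Θ.Q k ^ 2 + ∑ m, Θ.H m ^ 2

/-- The total backlog, with absolute values since the queues `H` may be negative. -/
def total : ℝ := ∑ l, |Θ.Z l| + ∑ k, |Θ.Q k| + ∑ m, |Θ.H m|

lemma lyapunov_nonneg : 0 ≤ Θ.lyapunov := by
  unfold lyapunov
  positivity

lemma total_nonneg : 0 ≤ Θ.total := by
  unfold total
  positivity

lemma lyapunov_le_total_sq : Θ.lyapunov ≤ Θ.total ^ 2 := by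
  have hZ : 0 ≤ ∑ l, |Θ.Z l| := by positivity
  have hQ : 0 ≤ ∑ k, |Θ.Q k| := by positivity
  have hH : 0 ≤ ∑ m, |Θ.H m| := by positivity
  rw [lyapunov, total]
  nlinarith [sum_sq_le_sq_sum_abs Θ.Z, sum_sq_le_sq_sum_abs Θ.Q, sum_sq_le_sq_sum_abs Θ.H,
    mul_nonneg hZ hQ, mul_nonneg hZ hH, mul_nonneg hQ hH]

lemma abs_le_of_lyapunov_le {Y : ℝ} (h : Θ.lyapunov ≤ Y) :
    (∀ k, |Θ.Q k| ≤ √Y) ∧ (∀ l, |Θ.Z l| ≤ √Y) ∧ ∀ m, |Θ.H m| ≤ √Y := by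
  have sq_le_sum {n : ℕ} (x : Fin n → ℝ) (i : Fin n) : x i ^ 2 ≤ ∑ j, x j ^ 2 :=
    Finset.single_le_sum (f := fun j => x j ^ 2) (fun _ _ => sq_nonneg _) (Finset.mem_univ i)
  have hZ : 0 ≤ ∑ l, Θ.Z l ^ 2 := by positivity
  have hQ : 0 ≤ ∑ k, Θ.Q k ^ 2 := by positivity
  have hH : 0 ≤ ∑ m, Θ.H m ^ 2 := by positivity
  rw [lyapunov] at h
  exact ⟨fun k => Real.abs_le_sqrt (by linarith [sq_le_sum Θ.Q k]),
    fun l => Real.abs_le_sqrt (by linarith [sq_le_sum Θ.Z l]),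
    fun m => Real.abs_le_sqrt (by linarith [sq_le_sum Θ.H m])⟩

end Backlog

/-- The data of the scheduling problem together with the boundedness Assumption A1 and the bounds
on the costs `f` and `g` of the auxiliary variables, in the notation of the paper. The bounds on
`f` and `g` are required only on the box cut out by `xmin` and `xmax`. -/
structure QueueNetwork (Ω Act : Type*) (K M L : ℕ) where
  A : Ω → Set Act
  ahat : Fin K → Act → Ω → ℝ
  bhat : Fin K → Act → Ω → ℝ
  xhat : Fin M → Act → Ω → ℝ
  y0hat : Act → Ω → ℝ
  yhat : Fin L → Act → Ω → ℝ
  X : Set (Fin M → ℝ)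
  f : (Fin M → ℝ) → ℝ
  g : Fin L → (Fin M → ℝ) → ℝ
  amax : Fin K → ℝ
  bmax : Fin K → ℝ
  xmin : Fin M → ℝ
  xmax : Fin M → ℝ
  y0min : ℝ
  y0max : ℝ
  ymin : Fin L → ℝ
  ymax : Fin L → ℝ
  fmin : ℝ
  fmax : ℝ
  gmin : Fin L → ℝ
  gmax : Fin L → ℝ
  β : Fin L → Fin M → ℝ
  ahat_mem : ∀ w, ∀ a ∈ A w, ∀ k, ahat k a w ∈ Set.Icc 0 (amax k)
  bhat_mem : ∀ w, ∀ a ∈ A w, ∀ k, bhat k a w ∈ Set.Icc 0 (bmax k)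
  xhat_mem : ∀ w, ∀ a ∈ A w, ∀ m, xhat m a w ∈ Set.Icc (xmin m) (xmax m)
  y0hat_mem : ∀ w, ∀ a ∈ A w, y0hat a w ∈ Set.Icc y0min y0max
  yhat_mem : ∀ w, ∀ a ∈ A w, ∀ l, yhat l a w ∈ Set.Icc (ymin l) (ymax l)
  f_mem : ∀ x : Fin M → ℝ, (∀ m, x m ∈ Set.Icc (xmin m) (xmax m)) → f x ∈ Set.Icc fmin fmax
  g_mem : ∀ l, ∀ x : Fin M → ℝ, (∀ m, x m ∈ Set.Icc (xmin m) (xmax m)) →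
    g l x ∈ Set.Icc (gmin l) (gmax l)
  β_nonneg : ∀ l m, 0 ≤ β l m
  g_add_le : ∀ l, ∀ x y : Fin M → ℝ, (∀ m, x m ∈ Set.Icc (xmin m) (xmax m)) →
    (∀ m, x m + y m ∈ Set.Icc (xmin m) (xmax m)) → g l (x + y) ≤ g l x + ∑ m, β l m * |y m|

namespace QueueNetwork

variable {Ω Act : Type*} {K M L : ℕ} (N : QueueNetwork Ω Act K M L)

/-- A decision `(a, γ)` that may be taken in a slot with event `w`. -/
structure Feasible (w : Ω) (a : Act) (γ : Fin M → ℝ) : Prop where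
  mem_A : a ∈ N.A w
  mem_X : γ ∈ N.X
  mem_box : ∀ m, γ m ∈ Set.Icc (N.xmin m) (N.xmax m)

/-- The largest possible change `z_l^diff` of the queue `Z l` in one slot. -/
def zdiff (l : Fin L) : ℝ := max |N.ymax l + N.gmax l| |N.ymin l + N.gmin l|

/-- The largest possible change `q_k^diff` of the queue `Q k` in one slot. -/
def qdiff (k : Fin K) : ℝ := max (N.bmax k) (N.amax k)

/-- The largest possible change `h_m^diff` of the queue `H m` in one slot. -/
def hdiff (m : Fin M) : ℝ := N.xmax m - N.xmin m

/-- The quantity bounded by the constant `B` of the theorem. -/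
noncomputable def secondMoment (w : Ω) (a : Act) (γ : Fin M → ℝ) : ℝ :=
  (1 / 2) * ∑ l, (N.yhat l a w + N.g l γ) ^ 2
    + (1 / 2) * ∑ k, (N.bhat k a w ^ 2 + N.ahat k a w ^ 2)
    + (1 / 2) * ∑ m, (γ m - N.xhat m a w) ^ 2

/-- The quantity bounded by the constant `D` of the theorem. -/
noncomputable def weightedIncrement (w : Ω) (a : Act) (γ : Fin M → ℝ) : ℝ :=
  (1 / 2) * ∑ l, N.zdiff l * |N.yhat l a w + N.g l γ|
    + ∑ m, N.hdiff m * |N.xhat m a w - γ m|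
    + (1 / 2) * ∑ k, N.qdiff k * max (N.bhat k a w) (N.ahat k a w)

/-- The constant `√D₁` of the theorem. -/
noncomputable def driftConst (V B C εV : ℝ) : ℝ :=
  (B + C) / V + (N.y0max - N.y0min) + (N.fmax - N.fmin) + εV

/-- The expression `E_t(a, γ)` of the network in the state `Θ`. -/
noncomputable def driftPlusPenalty (V : ℝ) (w : Ω) (Θ : Backlog K M L) (a : Act)
    (γ : Fin M → ℝ) : ℝ :=
  driftExpr N.ahat N.bhat N.xhat N.y0hat N.yhat N.g N.f V w Θ.Z Θ.Q Θ.H a γ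

/-- The Slater condition A3, with slackness `δ`, for the event `w`. -/
def Slater (δ : ℝ) (w : Ω) : Prop :=
  ∃ a ∈ N.A w,
    (∀ l, N.yhat l a w + N.g l (fun m => N.xhat m a w) ≤ -δ) ∧
    (∀ k, N.ahat k a w ≤ N.bhat k a w - δ) ∧
    (∀ η : Fin M → ℝ, (∀ m, |η m| ≤ δ) → (fun m => N.xhat m a w) + η ∈ N.X) ∧
    ∀ m, N.xmin m + δ ≤ N.xhat m a w ∧ N.xhat m a w ≤ N.xmax m - δ

/-- `Θ` is the sequence of backlogs, initially empty, produced by the feasible decisions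
`(α t, γ t)` when the events are `ω t`. -/
structure IsTrajectory (ω : ℕ → Ω) (α : ℕ → Act) (γ : ℕ → Fin M → ℝ)
    (Θ : ℕ → Backlog K M L) : Prop where
  feasible : ∀ t, N.Feasible (ω t) (α t) (γ t)
  Q_zero : ∀ k, (Θ 0).Q k = 0
  Z_zero : ∀ l, (Θ 0).Z l = 0
  H_zero : ∀ m, (Θ 0).H m = 0
  Q_succ : ∀ k t, (Θ (t + 1)).Q k =
    max ((Θ t).Q k - N.bhat k (α t) (ω t)) 0 + N.ahat k (α t) (ω t)
  Z_succ : ∀ l t, (Θ (t + 1)).Z l = max ((Θ t).Z l + N.yhat l (α t) (ω t) + N.g l (γ t)) 0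
  H_succ : ∀ m t, (Θ (t + 1)).H m = (Θ t).H m + γ t m - N.xhat m (α t) (ω t)

variable {N}

namespace Feasible

variable {w : Ω} {a : Act} {γ : Fin M → ℝ} (h : N.Feasible w a γ)
include h

lemma abs_yhat_add_g_le_zdiff (l : Fin L) : |N.yhat l a w + N.g l γ| ≤ N.zdiff l := by
  have hy := N.yhat_mem w a h.mem_A l
  have hg := N.g_mem l γ h.mem_box
  rw [zdiff, max_comm]
  exact abs_le_max_abs_abs (add_le_add hy.1 hg.1) (add_le_add hy.2 hg.2)

lemma max_bhat_ahat_le_qdiff (k : Fin K) : max (N.bhat k a w) (N.ahat k a w) ≤ N.qdiff k :=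
  max_le_max (N.bhat_mem w a h.mem_A k).2 (N.ahat_mem w a h.mem_A k).2

lemma abs_xhat_sub_le_hdiff (m : Fin M) : |N.xhat m a w - γ m| ≤ N.hdiff m := by
  have hx := N.xhat_mem w a h.mem_A m
  have hγ := h.mem_box m
  exact abs_sub_le_of_le_of_le hx.1 hx.2 hγ.1 hγ.2

end Feasible

lemma Slater.exists_feasible {δ s : ℝ} {w : Ω} (hSlater : N.Slater δ w) (hs : s ≤ δ)
    {η : Fin M → ℝ} (hη : ∀ m, |η m| ≤ s) :
    ∃ a γ, N.Feasible w a γ ∧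
      (∀ l, N.yhat l a w + N.g l γ ≤ -δ + s * ∑ m, N.β l m) ∧
      (∀ k, N.ahat k a w - N.bhat k a w ≤ -δ) ∧ ∀ m, γ m - N.xhat m a w = η m := by
  obtain ⟨a, ha, hcost, hqueue, hX, hbox⟩ := hSlater
  have hηδ (m : Fin M) : |η m| ≤ δ := (hη m).trans hs
  have hmem (m : Fin M) : N.xhat m a w + η m ∈ Set.Icc (N.xmin m) (N.xmax m) := by
    have hηm := abs_le.1 (hηδ m)
    constructor <;> linarith [hbox m]
  refine ⟨a, (fun m => N.xhat m a w) + η, ⟨ha, hX η hηδ, hmem⟩, fun l => ?_,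
    fun k => by linarith [hqueue k], fun m => add_sub_cancel_left _ _⟩
  have hsum : ∑ m, N.β l m * |η m| ≤ s * ∑ m, N.β l m := by
    rw [mul_comm, Finset.sum_mul]
    exact Finset.sum_le_sum fun m _ => mul_le_mul_of_nonneg_left (hη m) (N.β_nonneg l m)
  linarith [hcost l, N.g_add_le l _ η (N.xhat_mem w a ha) hmem]

lemma Slater.exists_driftPlusPenalty_add_le {V δ θ εZ εQ εH : ℝ} {w : Ω} {Θ : Backlog K M L}
    (hSlater : N.Slater δ w) (hV : 0 ≤ V) (hZ : ∀ l, 0 ≤ Θ.Z l) (hQ : ∀ k, 0 ≤ Θ.Q k)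
    (hθH_nonneg : 0 ≤ θ + εH) (hθQ : θ + εQ ≤ δ) (hθH : θ + εH ≤ δ)
    (hθZ : ∀ l, θ + εZ + (θ + εH) * ∑ m, N.β l m ≤ δ) :
    ∃ a γ, N.Feasible w a γ ∧
      N.driftPlusPenalty V w Θ a γ
          + (∑ l, Θ.Z l * εZ + ∑ k, Θ.Q k * εQ + ∑ m, |Θ.H m| * εH)
        ≤ V * (N.y0max + N.fmax) - θ * Θ.total := by
  let η : Fin M → ℝ := fun m => -((θ + εH) * SignType.sign (Θ.H m))
  have hη (m : Fin M) : |η m| ≤ θ + εH := by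
    have hsign : |(SignType.sign (Θ.H m) : ℝ)| ≤ 1 := by
      cases SignType.sign (Θ.H m) <;> simp
    rw [abs_neg, abs_mul, abs_of_nonneg hθH_nonneg]
    exact mul_le_of_le_one_right hθH_nonneg hsign
  obtain ⟨a, γ, hfeas, hcost, hqueue, hγ⟩ := hSlater.exists_feasible hθH hη
  refine ⟨a, γ, hfeas, ?_⟩
  have hsumZ := sum_mul_add_sum_mul_le (u := fun l => N.yhat l a w + N.g l γ) (ε := εZ) (θ := θ)
    hZ fun l => by linarith [hcost l, hθZ l]
  have hsumQ := sum_mul_add_sum_mul_le (u := fun k => N.ahat k a w - N.bhat k a w) (ε := εQ)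
    (θ := θ) hQ fun k => by linarith [hqueue k]
  have hsumH : ∑ m, Θ.H m * (γ m - N.xhat m a w) + ∑ m, |Θ.H m| * εH
      = -(θ * ∑ m, |Θ.H m|) := by
    rw [← Finset.sum_add_distrib, Finset.mul_sum, ← Finset.sum_neg_distrib]
    refine Finset.sum_congr rfl fun m _ => ?_
    rw [hγ, ← self_mul_sign]
    ring
  have hpenalty : V * N.y0hat a w + V * N.f γ ≤ V * (N.y0max + N.fmax) := by
    rw [← mul_add]
    gcongr
    exacts [(N.y0hat_mem w a hfeas.mem_A).2, (N.f_mem γ hfeas.mem_box).2]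
  rw [driftPlusPenalty, driftExpr, Backlog.total]
  linarith

namespace IsTrajectory

variable {ω : ℕ → Ω} {α : ℕ → Act} {γ : ℕ → Fin M → ℝ} {Θ : ℕ → Backlog K M L}
  (hΘ : N.IsTrajectory ω α γ Θ)
include hΘ

lemma Q_nonneg (t : ℕ) (k : Fin K) : 0 ≤ (Θ t).Q k := by
  cases t with
  | zero => exact (hΘ.Q_zero k).ge
  | succ t =>
    rw [hΘ.Q_succ]
    exact add_nonneg (le_max_right _ _) (N.ahat_mem _ _ (hΘ.feasible t).mem_A k).1

lemma Z_nonneg (t : ℕ) (l : Fin L) : 0 ≤ (Θ t).Z l := by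
  cases t with
  | zero => exact (hΘ.Z_zero l).ge
  | succ t =>
    rw [hΘ.Z_succ]
    exact le_max_right _ _

lemma total_zero : (Θ 0).total = 0 := by
  simp [Backlog.total, hΘ.Q_zero, hΘ.Z_zero, hΘ.H_zero]

lemma lyapunov_succ_le_add_driftPlusPenalty (V : ℝ) (t : ℕ) :
    (Θ (t + 1)).lyapunov ≤ (Θ t).lyapunov
      + 2 * (N.secondMoment (ω t) (α t) (γ t) + N.driftPlusPenalty V (ω t) (Θ t) (α t) (γ t)
        - V * (N.y0hat (α t) (ω t) + N.f (γ t))) := by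
  have hA := (hΘ.feasible t).mem_A
  have hZ : ∑ l, (Θ (t + 1)).Z l ^ 2 ≤ ∑ l, (Θ t).Z l ^ 2
      + ∑ l, (N.yhat l (α t) (ω t) + N.g l (γ t)) ^ 2
      + 2 * ∑ l, (Θ t).Z l * (N.yhat l (α t) (ω t) + N.g l (γ t)) := by
    rw [Finset.mul_sum, ← Finset.sum_add_distrib, ← Finset.sum_add_distrib]
    refine Finset.sum_le_sum fun l _ => ?_
    rw [hΘ.Z_succ]
    exact (sq_max_zero_le_sq _).trans_eq (by ring)
  have hQ : ∑ k, (Θ (t + 1)).Q k ^ 2 ≤ ∑ k, (Θ t).Q k ^ 2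
      + ∑ k, (N.bhat k (α t) (ω t) ^ 2 + N.ahat k (α t) (ω t) ^ 2)
      + 2 * ∑ k, (Θ t).Q k * (N.ahat k (α t) (ω t) - N.bhat k (α t) (ω t)) := by
    rw [Finset.mul_sum, ← Finset.sum_add_distrib, ← Finset.sum_add_distrib]
    refine Finset.sum_le_sum fun k _ => ?_
    rw [hΘ.Q_succ]
    exact sq_max_sub_zero_add_le (hΘ.Q_nonneg t k) (N.ahat_mem _ _ hA k).1
      (N.bhat_mem _ _ hA k).1
  have hH : ∑ m, (Θ (t + 1)).H m ^ 2 = ∑ m, (Θ t).H m ^ 2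
      + ∑ m, (γ t m - N.xhat m (α t) (ω t)) ^ 2
      + 2 * ∑ m, (Θ t).H m * (γ t m - N.xhat m (α t) (ω t)) := by
    rw [Finset.mul_sum, ← Finset.sum_add_distrib, ← Finset.sum_add_distrib]
    refine Finset.sum_congr rfl fun m _ => ?_
    rw [hΘ.H_succ]
    ring
  rw [Backlog.lyapunov, Backlog.lyapunov, secondMoment, driftPlusPenalty, driftExpr]
  linarith

lemma lyapunov_succ_le_add_weightedIncrement {z : ℝ} (hz : ∀ l, N.zdiff l ≤ z)
    (hq : ∀ k, N.qdiff k ≤ z) (hh : ∀ m, N.hdiff m ≤ z) (t : ℕ) :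
    (Θ (t + 1)).lyapunov ≤ (Θ t).lyapunov
      + 2 * N.weightedIncrement (ω t) (α t) (γ t) + 2 * (z * (Θ t).total) := by
  have hfeas := hΘ.feasible t
  have hb (k : Fin K) := (N.bhat_mem _ _ hfeas.mem_A k).1
  have hstepZ (l : Fin L) : |(Θ (t + 1)).Z l|
      ≤ |(Θ t).Z l| + |N.yhat l (α t) (ω t) + N.g l (γ t)| := by
    rw [hΘ.Z_succ, abs_of_nonneg (le_max_right _ _), add_assoc]
    exact max_le ((le_abs_self _).trans (abs_add_le _ _)) (by positivity)
  have hstepQ (k : Fin K) : |(Θ (t + 1)).Q k|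
      ≤ |(Θ t).Q k| + max (N.bhat k (α t) (ω t)) (N.ahat k (α t) (ω t)) := by
    rw [abs_of_nonneg (hΘ.Q_nonneg _ k), abs_of_nonneg (hΘ.Q_nonneg _ k), hΘ.Q_succ]
    exact add_le_add (max_le (sub_le_self _ (hb k)) (hΘ.Q_nonneg t k)) (le_max_right _ _)
  have hstepH (m : Fin M) : |(Θ (t + 1)).H m|
      ≤ |(Θ t).H m| + |N.xhat m (α t) (ω t) - γ t m| := by
    rw [hΘ.H_succ, add_sub_assoc, abs_sub_comm (N.xhat _ _ _)]
    exact abs_add_le _ _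
  have hZ := sum_sq_le_of_abs_le_add hstepZ (fun _ => abs_nonneg _)
    hfeas.abs_yhat_add_g_le_zdiff hz
  have hQ := sum_sq_le_of_abs_le_add hstepQ (fun k => (hb k).trans (le_max_left _ _))
    hfeas.max_bhat_ahat_le_qdiff hq
  have hH := sum_sq_le_of_abs_le_add hstepH (fun _ => abs_nonneg _)
    hfeas.abs_xhat_sub_le_hdiff hh
  have hincrH : 0 ≤ ∑ m, N.hdiff m * |N.xhat m (α t) (ω t) - γ t m| :=
    Finset.sum_nonneg fun m _ =>
      mul_nonneg ((abs_nonneg _).trans (hfeas.abs_xhat_sub_le_hdiff m)) (abs_nonneg _)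
  rw [Backlog.lyapunov, Backlog.lyapunov, weightedIncrement, Backlog.total]
  linarith

lemma lyapunov_succ_le_sub_total {V B C δ θ εV εZ εQ εH : ℝ} {t : ℕ} {Ct : ℝ}
    (hV : 0 < V) (hSlater : N.Slater δ (ω t))
    (hB : N.secondMoment (ω t) (α t) (γ t) ≤ B)
    (hCt : Ct ≤ C + V * εV + ∑ l, (Θ t).Z l * εZ + ∑ k, (Θ t).Q k * εQ
      + ∑ m, |(Θ t).H m| * εH)
    (happrox : ∀ a' γ', N.Feasible (ω t) a' γ' →
      N.driftPlusPenalty V (ω t) (Θ t) (α t) (γ t)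
        ≤ N.driftPlusPenalty V (ω t) (Θ t) a' γ' + Ct)
    (hθH_nonneg : 0 ≤ θ + εH) (hθQ : θ + εQ ≤ δ) (hθH : θ + εH ≤ δ)
    (hθZ : ∀ l, θ + εZ + (θ + εH) * ∑ m, N.β l m ≤ δ) :
    (Θ (t + 1)).lyapunov ≤ (Θ t).lyapunov
      + 2 * (V * N.driftConst V B C εV - θ * (Θ t).total) := by
  obtain ⟨a', γ', hfeas', hslater⟩ := hSlater.exists_driftPlusPenalty_add_le hV.le
    (hΘ.Z_nonneg t) (hΘ.Q_nonneg t) hθH_nonneg hθQ hθH hθZ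
  have hconst : V * N.driftConst V B C εV
      = B + C + V * (N.y0max - N.y0min) + V * (N.fmax - N.fmin) + V * εV := by
    rw [driftConst]
    field_simp
  have hpenalty : V * (N.y0min + N.fmin) ≤ V * (N.y0hat (α t) (ω t) + N.f (γ t)) := by
    gcongr
    exacts [(N.y0hat_mem _ _ (hΘ.feasible t).mem_A).1, (N.f_mem _ (hΘ.feasible t).mem_box).1]
  rw [hconst]
  linarith [hΘ.lyapunov_succ_le_add_driftPlusPenalty V t, happrox a' γ' hfeas']

end IsTrajectory

end QueueNetwork

theorem stmt_7_general {Ω Act : Type*} {K M L : ℕ} (N : QueueNetwork Ω Act K M L)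
    {ω : ℕ → Ω} {δ V C B D εV εZ εQ εH : ℝ} (hSlater : ∀ t, N.Slater δ (ω t)) (hV : 0 < V)
    (hB : ∀ t a' γ', N.Feasible (ω t) a' γ' → N.secondMoment (ω t) a' γ' ≤ B)
    (hD : ∀ t a' γ', N.Feasible (ω t) a' γ' → N.weightedIncrement (ω t) a' γ' ≤ D)
    (hεH : 0 ≤ εH) (hεQδ : εQ < δ) (hεHδ : εH < δ) (hεZδ : ∀ l, εZ + εH * ∑ m, N.β l m < δ)
    {α : ℕ → Act} {γ : ℕ → Fin M → ℝ} {Θ : ℕ → Backlog K M L} (hΘ : N.IsTrajectory ω α γ Θ)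
    {Ct : ℕ → ℝ}
    (hCt : ∀ t, Ct t ≤ C + V * εV + ∑ l, (Θ t).Z l * εZ + ∑ k, (Θ t).Q k * εQ
      + ∑ m, |(Θ t).H m| * εH)
    (happrox : ∀ t a' γ', N.Feasible (ω t) a' γ' →
      N.driftPlusPenalty V (ω t) (Θ t) (α t) (γ t)
        ≤ N.driftPlusPenalty V (ω t) (Θ t) a' γ' + Ct t)
    {βsum : ℝ} (hβsum : IsGreatest {x : ℝ | ∃ l, x = ∑ m, N.β l m} βsum)
    {zmax : ℝ} (hzl : ∀ l, N.zdiff l ≤ zmax) (hzk : ∀ k, N.qdiff k ≤ zmax)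
    (hzm : ∀ m, N.hdiff m ≤ zmax) (t : ℕ) :
    let bound := backlogBound V (slack δ εZ εQ εH βsum) (N.driftConst V B C εV) D zmax
    (∀ k, (Θ t).Q k ≤ bound) ∧ (∀ l, (Θ t).Z l ≤ bound) ∧ ∀ m, |(Θ t).H m| ≤ bound := by
  intro bound
  obtain ⟨l₀, hl₀⟩ := hβsum.1
  have hβ : 0 ≤ βsum := hl₀ ▸ Finset.sum_nonneg fun m _ => N.β_nonneg l₀ m
  have hz : 0 ≤ zmax := ((abs_nonneg _).trans (le_max_left _ _)).trans (hzl l₀)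
  have hθ : 0 < slack δ εZ εQ εH βsum := slack_pos hβ hεQδ hεHδ (hl₀ ▸ hεZδ l₀)
  obtain ⟨hθQ, hθH, hθβ⟩ := (le_slack_iff (δ := δ) (εZ := εZ) (εQ := εQ) (εH := εH) hβ).1 le_rfl
  have hθH_nonneg : 0 ≤ slack δ εZ εQ εH βsum + εH := add_nonneg hθ.le hεH
  have hθZ (l : Fin L) : slack δ εZ εQ εH βsum + εZ
      + (slack δ εZ εQ εH βsum + εH) * ∑ m, N.β l m ≤ δ := by
    linarith [mul_le_mul_of_nonneg_left (hβsum.2 ⟨l, rfl⟩) hθH_nonneg]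
  have drift (t : ℕ) := hΘ.lyapunov_succ_le_sub_total hV (hSlater t)
    (hB t _ _ (hΘ.feasible t)) (hCt t) (happrox t) hθH_nonneg hθQ hθH hθZ
  have growth (t : ℕ) : (Θ (t + 1)).lyapunov
      ≤ (Θ t).lyapunov + 2 * D + 2 * (zmax * (Θ t).total) := by
    linarith [hΘ.lyapunov_succ_le_add_weightedIncrement hzl hzk hzm t,
      hD t _ _ (hΘ.feasible t)]
  have hlyapunov := le_of_drift_of_growth hθ hz (fun t => (Θ t).lyapunov_nonneg)
    (fun t => (Θ t).total_nonneg) (fun t => (Θ t).lyapunov_le_total_sq) hΘ.total_zero drift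
    growth t
  obtain ⟨hQ, hZ, hH⟩ := (Θ t).abs_le_of_lyapunov_le hlyapunov
  have hbound := sqrt_le_backlogBound (c := N.driftConst V B C εV) (D := D) hV hθ hz
  exact ⟨fun k => (le_abs_self _).trans ((hQ k).trans hbound),
    fun l => (le_abs_self _).trans ((hZ l).trans hbound), fun m => (hH m).trans hbound⟩

/-- Theorem 2(a): under Assumptions A1 and A3 (Slater slackness `δ`), a
`C(t)`-approximate policy with `C(t) ≤ C + Vε_V + Σ_l Z_l(t)ε_Z + Σ_k Q_k(t)ε_Q
 + Σ_m |H_m(t)|ε_H`, started from empty queues, keeps all queues deterministically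
bounded: `Q_k(t), Z_l(t), |H_m(t)| ≤ VC₃/θ` for all `t`. -/
theorem stmt_7
    {Ω Act : Type*} (ω : ℕ → Ω) (A : Ω → Set Act) (hAne : ∀ w, (A w).Nonempty)
    (K M L : ℕ) (hK : 0 < K) (hM : 0 < M) (hL : 0 < L)
    (ahat bhat : Fin K → Act → Ω → ℝ) (xhat : Fin M → Act → Ω → ℝ)
    (y0hat : Act → Ω → ℝ) (yhat : Fin L → Act → Ω → ℝ)
    (amax bmax : Fin K → ℝ) (xmin xmax : Fin M → ℝ)
    (y0min y0max : ℝ) (ymin ymax : Fin L → ℝ)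
    -- Assumption A1 (boundedness)
    (hA1a : ∀ (w : Ω) (a' : Act), a' ∈ A w → ∀ k, 0 ≤ ahat k a' w ∧ ahat k a' w ≤ amax k)
    (hA1b : ∀ (w : Ω) (a' : Act), a' ∈ A w → ∀ k, 0 ≤ bhat k a' w ∧ bhat k a' w ≤ bmax k)
    (hA1x : ∀ (w : Ω) (a' : Act), a' ∈ A w → ∀ m, xmin m ≤ xhat m a' w ∧ xhat m a' w ≤ xmax m)
    (hA1y0 : ∀ (w : Ω) (a' : Act), a' ∈ A w → y0min ≤ y0hat a' w ∧ y0hat a' w ≤ y0max)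
    (hA1y : ∀ (w : Ω) (a' : Act), a' ∈ A w → ∀ l, ymin l ≤ yhat l a' w ∧ yhat l a' w ≤ ymax l)
    -- the convex set X and the cost functions f, g_l on the box
    (X : Set (Fin M → ℝ)) (hX : Convex ℝ X)
    (f : (Fin M → ℝ) → ℝ) (g : Fin L → (Fin M → ℝ) → ℝ)
    (fmin fmax : ℝ) (gmin gmax : Fin L → ℝ) (β : Fin L → Fin M → ℝ)
    (hβ : ∀ l m, 0 ≤ β l m)
    (hfconv : ConvexOn ℝ {x : Fin M → ℝ | ∀ m, xmin m ≤ x m ∧ x m ≤ xmax m} f)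
    (hfcont : ContinuousOn f {x : Fin M → ℝ | ∀ m, xmin m ≤ x m ∧ x m ≤ xmax m})
    (hfbd : ∀ x ∈ {x : Fin M → ℝ | ∀ m, xmin m ≤ x m ∧ x m ≤ xmax m},
      fmin ≤ f x ∧ f x ≤ fmax)
    (hgconv : ∀ l, ConvexOn ℝ {x : Fin M → ℝ | ∀ m, xmin m ≤ x m ∧ x m ≤ xmax m} (g l))
    (hgcont : ∀ l, ContinuousOn (g l) {x : Fin M → ℝ | ∀ m, xmin m ≤ x m ∧ x m ≤ xmax m})
    (hgbd : ∀ l, ∀ x ∈ {x : Fin M → ℝ | ∀ m, xmin m ≤ x m ∧ x m ≤ xmax m},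
      gmin l ≤ g l x ∧ g l x ≤ gmax l)
    (hglip : ∀ (l : Fin L) (x y : Fin M → ℝ),
      (∀ m, xmin m ≤ x m ∧ x m ≤ xmax m) →
      (∀ m, xmin m ≤ x m + y m ∧ x m + y m ≤ xmax m) →
      g l (x + y) ≤ g l x + ∑ m, β l m * |y m|)
    -- Assumption A3 (Slater condition with slackness δ)
    (δ : ℝ) (hδ : 0 < δ)
    (hA3 : ∀ t, ∃ a' ∈ A (ω t),
      (∀ l, yhat l a' (ω t) + g l (fun m => xhat m a' (ω t)) ≤ -δ) ∧
      (∀ k, ahat k a' (ω t) ≤ bhat k a' (ω t) - δ) ∧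
      (∀ ε : Fin M → ℝ, (∀ m, |ε m| ≤ δ) →
        ((fun m => xhat m a' (ω t)) + ε) ∈ X) ∧
      (∀ m, xmin m + δ ≤ xhat m a' (ω t) ∧ xhat m a' (ω t) ≤ xmax m - δ))
    -- parameters and the constants B and D
    (V C B D : ℝ) (hV : 0 < V) (hC : 0 ≤ C)
    (hB : ∀ (t : ℕ) (a' : Act) (γ' : Fin M → ℝ), a' ∈ A (ω t) → γ' ∈ X →
      (∀ m, xmin m ≤ γ' m ∧ γ' m ≤ xmax m) →
      (1 / 2) * ∑ l, (yhat l a' (ω t) + g l γ') ^ 2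
        + (1 / 2) * ∑ k, ((bhat k a' (ω t)) ^ 2 + (ahat k a' (ω t)) ^ 2)
        + (1 / 2) * ∑ m, (γ' m - xhat m a' (ω t)) ^ 2 ≤ B)
    (hD : ∀ (t : ℕ) (a' : Act) (γ' : Fin M → ℝ), a' ∈ A (ω t) → γ' ∈ X →
      (∀ m, xmin m ≤ γ' m ∧ γ' m ≤ xmax m) →
      (1 / 2) * ∑ l, max (|ymax l + gmax l|) (|ymin l + gmin l|)
          * |yhat l a' (ω t) + g l γ'|
        + ∑ m, (xmax m - xmin m) * |xhat m a' (ω t) - γ' m|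
        + (1 / 2) * ∑ k, max (bmax k) (amax k)
          * max (bhat k a' (ω t)) (ahat k a' (ω t)) ≤ D)
    -- approximation error constants
    (εV εZ εQ εH : ℝ) (hεV : 0 ≤ εV) (hεZ : 0 ≤ εZ) (hεQ : 0 ≤ εQ) (hεH : 0 ≤ εH)
    (hεQδ : εQ < δ) (hεHδ : εH < δ)
    (hεZδ : ∀ l, εZ + εH * ∑ m, β l m < δ)
    -- the C(t)-approximate policy and the queues (initially empty)
    (α : ℕ → Act) (γ : ℕ → Fin M → ℝ)
    (hα : ∀ t, α t ∈ A (ω t)) (hγX : ∀ t, γ t ∈ X)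
    (hγbox : ∀ t m, xmin m ≤ γ t m ∧ γ t m ≤ xmax m)
    (Q : Fin K → ℕ → ℝ) (Z : Fin L → ℕ → ℝ) (H : Fin M → ℕ → ℝ)
    (hQ0 : ∀ k, Q k 0 = 0) (hZ0 : ∀ l, Z l 0 = 0) (hH0 : ∀ m, H m 0 = 0)
    (hQ : ∀ k t, Q k (t + 1) = max (Q k t - bhat k (α t) (ω t)) 0 + ahat k (α t) (ω t))
    (hZ : ∀ l t, Z l (t + 1) = max (Z l t + yhat l (α t) (ω t) + g l (γ t)) 0)
    (hH : ∀ m t, H m (t + 1) = H m t + γ t m - xhat m (α t) (ω t))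
    (Ct : ℕ → ℝ)
    (hCt : ∀ t, Ct t ≤ C + V * εV + (∑ l, Z l t * εZ) + (∑ k, Q k t * εQ)
        + (∑ m, |H m t| * εH))
    (hCapprox : ∀ (t : ℕ) (a' : Act) (γ' : Fin M → ℝ), a' ∈ A (ω t) → γ' ∈ X →
      (∀ m, xmin m ≤ γ' m ∧ γ' m ≤ xmax m) →
      driftExpr ahat bhat xhat y0hat yhat g f V (ω t)
          (fun l => Z l t) (fun k => Q k t) (fun m => H m t) (α t) (γ t)
        ≤ driftExpr ahat bhat xhat y0hat yhat g f V (ω t)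
          (fun l => Z l t) (fun k => Q k t) (fun m => H m t) a' γ' + Ct t)
    -- derived constants
    (βsum : ℝ) (hβsum : IsGreatest {x : ℝ | ∃ l, x = ∑ m, β l m} βsum)
    (zmax : ℝ)
    (hzmax : IsGreatest {x : ℝ |
        (∃ l, x = max (|ymax l + gmax l|) (|ymin l + gmin l|)) ∨
        (∃ k, x = max (bmax k) (amax k)) ∨
        (∃ m, x = xmax m - xmin m)} zmax)
    (θ : ℝ)
    (hθ : θ = min (δ - εQ) (min (δ - εH) ((δ - εZ - εH * βsum) / (1 + βsum))))
    (D₁ D₂ D₃ C₃ : ℝ)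
    (hD₁ : D₁ = ((B + C) / V + (y0max - y0min) + (fmax - fmin) + εV) ^ 2)
    (hD₂ : D₂ = 2 * D * θ ^ 2 / V ^ 2)
    (hD₃ : D₃ = 2 * zmax * θ / V * Real.sqrt D₁)
    (hC₃ : C₃ = Real.sqrt (D₁ + D₂ + D₃)) :
    ∀ t : ℕ,
      (∀ k, Q k t ≤ V * C₃ / θ) ∧
      (∀ l, Z l t ≤ V * C₃ / θ) ∧
      (∀ m, |H m t| ≤ V * C₃ / θ) := by
  subst hθ hC₃ hD₁ hD₂ hD₃
  exact stmt_7_general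
    { A, ahat, bhat, xhat, y0hat, yhat, X, f, g, amax, bmax, xmin, xmax, y0min, y0max, ymin, ymax,
      fmin, fmax, gmin, gmax, β, ahat_mem := hA1a, bhat_mem := hA1b, xhat_mem := hA1x,
      y0hat_mem := hA1y0, yhat_mem := hA1y, f_mem := hfbd, g_mem := hgbd, β_nonneg := hβ,
      g_add_le := hglip }
    (Θ := fun t => ⟨fun k => Q k t, fun l => Z l t, fun m => H m t⟩) hA3 hV
    (fun t a' γ' h => hB t a' γ' h.mem_A h.mem_X h.mem_box)
    (fun t a' γ' h => hD t a' γ' h.mem_A h.mem_X h.mem_box) hεH hεQδ hεHδ hεZδ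
    ⟨fun t => ⟨hα t, hγX t, hγbox t⟩, hQ0, hZ0, hH0, hQ, hZ, hH⟩ hCt
    (fun t a' γ' h => hCapprox t a' γ' h.mem_A h.mem_X h.mem_box) hβsum
    (fun l => hzmax.2 (.inl ⟨l, rfl⟩)) (fun k => hzmax.2 (.inr (.inl ⟨k, rfl⟩)))
    (fun m => hzmax.2 (.inr (.inr ⟨m, rfl⟩)))
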